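/- If M is a doubly invariant subspace of RL^2, then there exists a measurable subset E of the unit circle T such that M = 1_E·RL^2, where 1_E denotes the characteristic function of E. -/

import Mathlib

open MeasureTheory Complex

noncomputable section

instance : Fact (0 < 2 * Real.pi) := ⟨Real.two_pi_pos⟩

/-- The unit circle, modelled as `ℝ / 2πℤ`, with normalized Haar (Lebesgue) measure
of total mass `1`. -/
abbrev 𝕋 : Type := AddCircle (2 * Real.pi)

abbrev μT : Measure 𝕋 := AddCircle.haarAddCircle

/-- `RL²`: the set of `f ∈ L²` all of whose Fourier coefficients are real. -/
def RL2 : Set (Lp ℂ 2 μT) :=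
  {f | ∀ n : ℤ, (fourierCoeff (f : 𝕋 → ℂ) n).im = 0}

/-- The image `e^{iθ}·M` of a set `M ⊆ L²` under multiplication by the coordinate function. -/
def shiftSet (M : Set (Lp ℂ 2 μT)) : Set (Lp ℂ 2 μT) :=
  {g | ∃ f ∈ M, (g : 𝕋 → ℂ) =ᵐ[μT] fun t => fourier 1 t * (f : 𝕋 → ℂ) t}

/-! Let `P` be the orthogonal projection of `L²`, as a real Hilbert space, onto `M`. Elements of
`RL²` have real inner products, so for `f ∈ M` and `v ∈ RL²` every `e^{inθ} f ∈ M` is orthogonal to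
`v - P v` also for the complex inner product. Thus all Fourier coefficients of the `L¹` function
`conj f * (v - P v)` vanish, and `v = P v` wherever `f ≠ 0`. For `v = 1` this says that `P 1 = 1`
wherever an element of `M` does not vanish, so `E = {P 1 = 1}` carries all of `M`; for `f = P 1` it
says that `P v = v` on `E`, so `1_E v = P v ∈ M`.
-/

open AddCircle (haarAddCircle)
open Filter Topology
open scoped ENNReal NNReal InnerProductSpace BoundedContinuousFunction

section IntegralAgainstContinuous

variable {X E : Type*} [TopologicalSpace X] [MeasurableSpace X]
  [NormedAddCommGroup E] [NormedSpace ℝ E] {μ : Measure X} {F : X → E}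

theorem tendsto_integral_apprSeq_smul [OpensMeasurableSpace X] [HasOuterApproxClosed X]
    (hF : Integrable F μ) {s : Set X} (hs : IsClosed s) :
    Tendsto (fun n => ∫ x, hs.apprSeq n x • F x ∂μ) atTop (𝓝 (∫ x in s, F x ∂μ)) := by
  rw [← integral_indicator hs.measurableSet]
  refine tendsto_integral_of_dominated_convergence (fun x => ‖F x‖)
    (fun n => (hs.apprSeq n).continuous.aestronglyMeasurable.smul hF.1) hF.norm
    (fun n => ae_of_all _ fun x => ?_) (ae_of_all _ fun x => ?_)
  · have hle : ((hs.apprSeq n x : ℝ≥0) : ℝ) ≤ 1 :=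
      mod_cast HasOuterApproxClosed.apprSeq_apply_le_one hs n x
    rw [NNReal.smul_def, norm_smul, NNReal.norm_eq]
    exact mul_le_of_le_one_left (norm_nonneg _) hle
  · have hlim := tendsto_pi_nhds.1 (HasOuterApproxClosed.tendsto_apprSeq hs) x
    by_cases hx : x ∈ s <;> simpa [hx] using hlim.smul_const (F x)

theorem ae_eq_zero_of_forall_integral_boundedContinuous_smul_eq_zero [BorelSpace X]
    [HasOuterApproxClosed X] [CompleteSpace E] (hF : Integrable F μ)
    (h : ∀ φ : X →ᵇ ℝ≥0, ∫ x, φ x • F x ∂μ = 0) : F =ᵐ[μ] 0 := by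
  refine ae_eq_zero_of_forall_setIntegral_isClosed_eq_zero hF fun s hs => ?_
  have hlim := tendsto_integral_apprSeq_smul hF hs
  simp only [h] at hlim
  exact tendsto_nhds_unique hlim tendsto_const_nhds

theorem ae_eq_zero_of_forall_integral_smul_eq_zero_of_dense_span {𝕜 : Type*} [RCLike 𝕜]
    [NormedSpace 𝕜 E] [IsScalarTower ℝ 𝕜 E] [CompleteSpace E] [BorelSpace X]
    [CompactSpace X] [HasOuterApproxClosed X] [IsFiniteMeasure μ] {S : Set C(X, 𝕜)}
    (hS : Dense (Submodule.span 𝕜 S : Set C(X, 𝕜))) (hF : Integrable F μ)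
    (h : ∀ φ ∈ S, ∫ x, φ x • F x ∂μ = 0) : F =ᵐ[μ] 0 := by
  have hF_memLp : MemLp F 1 μ := memLp_one_iff_integrable.2 hF
  let Λ : C(X, 𝕜) →L[𝕜] E :=
    ((ContinuousLinearMap.lsmul 𝕜 𝕜).lpPairing μ ∞ 1).flip (hF_memLp.toLp F) ∘L
      ContinuousMap.toLp ∞ μ 𝕜
  have hΛ (φ : C(X, 𝕜)) : Λ φ = ∫ x, φ x • F x ∂μ := by
    simp only [Λ, ContinuousLinearMap.comp_apply, ContinuousLinearMap.flip_apply,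
      ContinuousLinearMap.lpPairing_eq_integral]
    refine integral_congr_ae ?_
    filter_upwards [ContinuousMap.coeFn_toLp (p := ∞) (𝕜 := 𝕜) μ φ,
      hF_memLp.coeFn_toLp] with x hφ hFx
    rw [hφ, hFx, ContinuousLinearMap.lsmul_apply]
  have hΛ_zero : Λ = 0 := ContinuousLinearMap.ext_on hS fun φ hφ => (hΛ φ).trans (h φ hφ)
  refine ae_eq_zero_of_forall_integral_boundedContinuous_smul_eq_zero hF fun φ => ?_
  let ψ : C(X, 𝕜) := ⟨fun x => ((φ x : ℝ) : 𝕜), by fun_prop⟩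
  calc ∫ x, φ x • F x ∂μ = Λ ψ := by
        rw [hΛ]
        exact integral_congr_ae <| ae_of_all _ fun x =>
          RCLike.real_smul_eq_coe_smul (φ x : ℝ) (F x)
    _ = 0 := by rw [hΛ_zero, zero_apply]

end IntegralAgainstContinuous

section CircleFourier

variable {T : ℝ} [Fact (0 < T)]

theorem ae_eq_zero_of_forall_fourierCoeff_eq_zero {E : Type*} [NormedAddCommGroup E]
    [NormedSpace ℂ E] [CompleteSpace E] {F : AddCircle T → E}
    (hF : Integrable F haarAddCircle) (h : ∀ n, fourierCoeff F n = 0) :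
    F =ᵐ[haarAddCircle] 0 := by
  refine ae_eq_zero_of_forall_integral_smul_eq_zero_of_dense_span
    (Submodule.dense_iff_topologicalClosure_eq_top.2 span_fourier_closure_eq_top) hF ?_
  rintro _ ⟨n, rfl⟩
  simpa only [fourierCoeff, neg_neg] using h (-n)

section FourierMul

variable {E : Type*} [NormedAddCommGroup E] [NormedSpace ℂ E] {p : ℝ≥0∞}

/-- Multiplication by the monomial `fourier n`, that is by `e^{inθ}`, as a map of `L^p` of the
circle to itself, encoded as the Hölder product with `fourierLp ∞ n`. The doubly invariant subspaces
are those preserved by `fourierMul n` for all `n : ℤ`. -/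
def fourierMul (n : ℤ) (f : Lp E p (haarAddCircle (T := T))) :
    Lp E p (haarAddCircle (T := T)) :=
  fourierLp (T := T) ∞ n • f

theorem coeFn_fourierMul (n : ℤ) (f : Lp E p (haarAddCircle (T := T))) :
    fourierMul n f =ᵐ[haarAddCircle] fun t => fourier n t • f t := by
  filter_upwards [Lp.coeFn_lpSMul (r := p) (fourierLp (T := T) ∞ n) f,
    coeFn_fourierLp (T := T) ∞ n] with t ht hn
  rw [fourierMul, ht, Pi.smul_apply', hn]

theorem fourierMul_zero (f : Lp E p (haarAddCircle (T := T))) : fourierMul 0 f = f := by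
  refine Lp.ext ?_
  filter_upwards [coeFn_fourierMul 0 f] with t ht
  rw [ht, fourier_zero, one_smul]

theorem fourierMul_add (m n : ℤ) (f : Lp E p (haarAddCircle (T := T))) :
    fourierMul (m + n) f = fourierMul m (fourierMul n f) := by
  refine Lp.ext ?_
  filter_upwards [coeFn_fourierMul (m + n) f, coeFn_fourierMul n f,
    coeFn_fourierMul m (fourierMul n f)] with t hmn hn hm
  rw [hmn, hm, hn, fourier_add, mul_smul]

end FourierMul

theorem inner_fourierMul_eq_fourierCoeff {E : Type*} [NormedAddCommGroup E]
    [InnerProductSpace ℂ E] (n : ℤ) (f u : Lp E 2 (haarAddCircle (T := T))) :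
    ⟪fourierMul n f, u⟫_ℂ = fourierCoeff (fun t => ⟪f t, u t⟫_ℂ) n := by
  rw [L2.inner_def, fourierCoeff]
  refine integral_congr_ae ?_
  filter_upwards [coeFn_fourierMul n f] with t ht
  rw [ht, fourier_neg, inner_smul_left, smul_eq_mul]

theorem ae_eq_zero_or_eq_zero_of_forall_inner_fourierMul_eq_zero
    {f u : Lp ℂ 2 (haarAddCircle (T := T))} (h : ∀ n, ⟪fourierMul n f, u⟫_ℂ = 0) :
    ∀ᵐ t ∂haarAddCircle, f t = 0 ∨ u t = 0 := by
  have hinner := ae_eq_zero_of_forall_fourierCoeff_eq_zero (L2.integrable_inner (𝕜 := ℂ) f u)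
    fun n => (inner_fourierMul_eq_fourierCoeff n f u).symm.trans (h n)
  filter_upwards [hinner] with t ht
  rw [Pi.zero_apply, RCLike.inner_apply, mul_eq_zero, map_eq_zero] at ht
  exact ht.symm

end CircleFourier

theorem exists_measurableSet_eq_indicator_mul {α 𝕜 : Type*} [MeasurableSpace α] {μ : Measure α}
    {p : ℝ≥0∞} [NormedRing 𝕜] [Nontrivial 𝕜] {M R : Set (Lp 𝕜 p μ)} (hMR : M ⊆ R)
    {e : Lp 𝕜 p μ} (heR : e ∈ R) (he : ∀ᵐ x ∂μ, e x = 1)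
    (h : ∀ v ∈ R, ∃ w ∈ M, ∀ f ∈ M, ∀ᵐ x ∂μ, f x = 0 ∨ v x = w x) :
    ∃ E : Set α, MeasurableSet E ∧
      M = {g : Lp 𝕜 p μ | ∃ v ∈ R, g =ᵐ[μ] fun x => E.indicator (fun _ => (1 : 𝕜)) x * v x} := by
  obtain ⟨q, hqM, hq⟩ := h e heR
  have hq_one : ∀ f ∈ M, ∀ᵐ x ∂μ, f x = 0 ∨ q x = 1 := fun f hf => by
    filter_upwards [hq f hf, he] with x hfx hex
    exact hfx.imp_right fun hqx => hqx.symm.trans hex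
  refine ⟨{x | q x = 1},
    (Lp.stronglyMeasurable q).measurableSet_eq_fun stronglyMeasurable_const, ?_⟩
  refine Set.Subset.antisymm (fun g hg => ⟨g, hMR hg, ?_⟩) ?_
  · filter_upwards [hq_one g hg] with x hx
    by_cases hqx : q x = 1
    · simp [hqx]
    · simp [hqx, hx.resolve_right hqx]
  · rintro g ⟨v, hv, hg⟩
    obtain ⟨w, hwM, hw⟩ := h v hv
    have hgw : g = w := by
      refine Lp.ext ?_
      filter_upwards [hg, hq_one w hwM, hw q hqM] with x hgx hwx hqvw
      by_cases hqx : q x = 1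
      · have hvw : v x = w x := hqvw.resolve_left (hqx ▸ one_ne_zero)
        simp [hgx, hqx, hvw]
      · simp [hgx, hqx, hwx.resolve_right hqx]
    rwa [hgw]

theorem im_inner_eq_zero_of_forall_im_repr_eq_zero {ι H : Type*} [NormedAddCommGroup H]
    [InnerProductSpace ℂ H] (b : HilbertBasis ι ℂ H) {x y : H} (hx : ∀ i, (b.repr x i).im = 0)
    (hy : ∀ i, (b.repr y i).im = 0) : (⟪x, y⟫_ℂ).im = 0 := by
  have hterm (i : ι) : (⟪x, b i⟫_ℂ * ⟪b i, y⟫_ℂ).im = 0 := by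
    rw [← inner_conj_symm x, ← b.repr_apply_apply, ← b.repr_apply_apply, mul_im, conj_im, hx, hy]
    simp only [neg_zero, mul_zero, zero_mul, add_zero]
  have hsum := hasSum_im (b.hasSum_inner_mul_inner x y)
  simp only [hterm] at hsum
  exact hsum.unique hasSum_zero

theorem real_inner_eq_re_inner_Lp {α : Type*} [MeasurableSpace α] {μ : Measure α}
    (f g : Lp ℂ 2 μ) : ⟪f, g⟫_ℝ = (⟪f, g⟫_ℂ).re := by
  rw [L2.inner_def, L2.inner_def]
  exact integral_re (L2.integrable_inner (𝕜 := ℂ) f g)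

theorem mem_RL2_iff_forall_im_repr_eq_zero {f : Lp ℂ 2 μT} :
    f ∈ RL2 ↔ ∀ n, (fourierBasis.repr f n).im = 0 := by
  simp only [RL2, Set.mem_ofPred_eq, fourierBasis_repr]

theorem sub_mem_RL2 {f g : Lp ℂ 2 μT} (hf : f ∈ RL2) (hg : g ∈ RL2) : f - g ∈ RL2 := by
  rw [mem_RL2_iff_forall_im_repr_eq_zero] at hf hg ⊢
  intro n
  rw [map_sub, lp.coeFn_sub, Pi.sub_apply, sub_im, hf, hg, sub_zero]

theorem fourierLp_mem_RL2 (n : ℤ) : fourierLp 2 n ∈ RL2 := by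
  classical
  rw [mem_RL2_iff_forall_im_repr_eq_zero]
  intro m
  rw [← coe_fourierBasis, fourierBasis.repr_self, lp.single_apply, Pi.single_apply]
  split_ifs <;> simp only [one_im, zero_im]

theorem inner_eq_zero_of_mem_RL2_of_real_inner_eq_zero {f g : Lp ℂ 2 μT} (hf : f ∈ RL2)
    (hg : g ∈ RL2) (h : ⟪f, g⟫_ℝ = 0) : ⟪f, g⟫_ℂ = 0 := by
  rw [mem_RL2_iff_forall_im_repr_eq_zero] at hf hg
  exact Complex.ext ((real_inner_eq_re_inner_Lp f g).symm.trans h)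
    (im_inner_eq_zero_of_forall_im_repr_eq_zero fourierBasis hf hg)

theorem shiftSet_eq_image (M : Set (Lp ℂ 2 μT)) : shiftSet M = fourierMul 1 '' M := by
  ext g
  refine exists_congr fun f => and_congr_right fun _ => ?_
  rw [eq_comm, Lp.ext_iff]
  exact (coeFn_fourierMul 1 f).congr_right.symm

theorem fourierMul_mem_of_shiftSet_eq {M : Set (Lp ℂ 2 μT)} (hM : shiftSet M = M)
    {f : Lp ℂ 2 μT} (hf : f ∈ M) (n : ℤ) : fourierMul n f ∈ M := by
  rw [shiftSet_eq_image] at hM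
  induction n with
  | zero => rwa [fourierMul_zero]
  | succ k ih =>
    rw [add_comm, fourierMul_add, ← hM]
    exact Set.mem_image_of_mem _ ih
  | pred k ih =>
    rw [← hM] at ih
    obtain ⟨g, hg, hgf⟩ := ih
    have hg_eq : fourierMul (-k - 1) f = g := by
      rw [sub_eq_neg_add, fourierMul_add, ← hgf, ← fourierMul_add, neg_add_cancel,
        fourierMul_zero]
    rwa [hg_eq]

/-- If `M` is a doubly invariant subspace of `RL²` (a closed real subspace of `L²` contained
in `RL²` with `e^{iθ}M = M`), then `M = 1_E·RL²` for some measurable subset `E` of the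
circle, where `1_E` is the characteristic function of `E`. -/
theorem doubly_invariant_subspace_RL2
    (M : Submodule ℝ (Lp ℂ 2 μT))
    (hMsub : (M : Set (Lp ℂ 2 μT)) ⊆ RL2)
    (hMclosed : IsClosed (M : Set (Lp ℂ 2 μT)))
    (hMinv : shiftSet (M : Set (Lp ℂ 2 μT)) = (M : Set (Lp ℂ 2 μT))) :
    ∃ E : Set 𝕋, MeasurableSet E ∧
      (M : Set (Lp ℂ 2 μT)) =
        {g : Lp ℂ 2 μT | ∃ h ∈ RL2, (g : 𝕋 → ℂ) =ᵐ[μT]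
          fun t => E.indicator (fun _ => (1 : ℂ)) t * (h : 𝕋 → ℂ) t} := by
  have : CompleteSpace M := hMclosed.completeSpace_coe
  have hone : ∀ᵐ t ∂μT, fourierLp 2 0 t = 1 := by
    filter_upwards [coeFn_fourierLp (T := 2 * Real.pi) 2 0] with t ht
    rw [ht, fourier_zero]
  refine exists_measurableSet_eq_indicator_mul hMsub (fourierLp_mem_RL2 0) hone fun v hv =>
    ⟨M.starProjection v, M.starProjection_apply_mem v, fun f hf => ?_⟩
  have hres : v - M.starProjection v ∈ RL2 :=
    sub_mem_RL2 hv (hMsub (M.starProjection_apply_mem v))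
  have horth (n : ℤ) : ⟪fourierMul n f, v - M.starProjection v⟫_ℂ = 0 := by
    have hn : fourierMul n f ∈ M := fourierMul_mem_of_shiftSet_eq hMinv hf n
    exact inner_eq_zero_of_mem_RL2_of_real_inner_eq_zero (hMsub hn) hres
      (M.inner_right_of_mem_orthogonal hn (M.sub_starProjection_mem_orthogonal v))
  filter_upwards [ae_eq_zero_or_eq_zero_of_forall_inner_fourierMul_eq_zero horth,
    Lp.coeFn_sub v (M.starProjection v)] with t ht hsub
  rwa [hsub, Pi.sub_apply, sub_eq_zero] at ht

end
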